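/- arXiv:1405.3396 — 2 statements merged into one kernel-verified Lean document; each statement's English description precedes it below -/
import Mathlib

section
/- Let (Ω, P) be a probability space, let U, V : Ω → [0,1] be random variables, and let φ : [0,1] × [0,1] → [0,1] be a measurable link function satisfying φ(u,v) + φ(v,u) = 1 for all u, v and φ(u,v) > 1/2 whenever u > v. Let B : Ω → {0,1} be a random variable such that the conditional expectation of 1 − B given the σ-algebra generated by (U,V) equals φ(U,V) almost surely. Then E[U·(1−B) + V·B] ≥ E[(U+V)/2]. Consequently, for any real μ*, the expected choice-based regret E[μ* − (U·(1−B) + V·B)] is at most the expected average regret E[μ* − (U+V)/2]. -/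
/-! The difference between the choice-based and the average utility is
`(U - V) * ((1 - B) - 1/2)`. Since `U - V` is `σ(U, V)`-measurable, it can be pulled out of the
conditional expectation, so `1 - B` may be replaced by `φ (U, V)` under the integral. The resulting
integrand `(U - V) * (φ (U, V) - 1/2)` is pointwise nonnegative, because the symmetry of `φ` makes
`φ (U, V) - 1/2` have the same sign as `U - V`. -/

open MeasureTheory

/-- **Observation 1.** Let `U, V` be `[0,1]`-valued random variables, `φ` a
measurable link function with `φ(u,v) + φ(v,u) = 1` and `φ(u,v) > 1/2` whenever `u > v`,
and `B` a `{0,1}`-valued random variable whose conditional expectation of `1 - B` given the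
σ-algebra generated by `(U,V)` equals `φ(U,V)` almost surely.  Then the expected
choice-based utility `E[U·(1−B) + V·B]` is at least the expected average utility
`E[(U+V)/2]`; consequently for any `μ*` the expected choice-based regret is at most the
expected average regret. -/
theorem expected_choice_regret_le_expected_average_regret
    {Ω : Type*} [MeasurableSpace Ω] (P : Measure Ω) [IsProbabilityMeasure P]
    (U V B : Ω → ℝ)
    (hUmeas : Measurable U) (hVmeas : Measurable V) (hBmeas : Measurable B)
    (hU01 : ∀ ω, U ω ∈ Set.Icc (0 : ℝ) 1)
    (hV01 : ∀ ω, V ω ∈ Set.Icc (0 : ℝ) 1)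
    (hB01 : ∀ ω, B ω = 0 ∨ B ω = 1)
    (φ : ℝ × ℝ → ℝ) (hφmeas : Measurable φ)
    (hφrange : ∀ u v : ℝ, u ∈ Set.Icc (0 : ℝ) 1 → v ∈ Set.Icc (0 : ℝ) 1 →
      φ (u, v) ∈ Set.Icc (0 : ℝ) 1)
    (hφsum : ∀ u v : ℝ, φ (u, v) + φ (v, u) = 1)
    (hφgt : ∀ u v : ℝ, u > v → φ (u, v) > 1 / 2)
    (hcond : ∀ᵐ ω ∂P,
      (P[(fun ω' => 1 - B ω') |
        MeasurableSpace.comap (fun ω' => (U ω', V ω')) inferInstance]) ω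
        = φ (U ω, V ω)) :
    (∫ ω, (U ω * (1 - B ω) + V ω * B ω) ∂P) ≥ (∫ ω, (U ω + V ω) / 2 ∂P) ∧
    ∀ μstar : ℝ,
      (∫ ω, (μstar - (U ω * (1 - B ω) + V ω * B ω)) ∂P) ≤
        (∫ ω, (μstar - (U ω + V ω) / 2) ∂P) := by
  have hdiff01 : ∀ ω, ‖U ω - V ω‖ ≤ 1 := fun ω => by
    obtain ⟨h1, h2⟩ := hU01 ω
    obtain ⟨h3, h4⟩ := hV01 ω
    rw [Real.norm_eq_abs, abs_le]
    constructor <;> linarith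
  have hBnorm : ∀ ω, ‖1 - B ω‖ ≤ 1 := fun ω => by
    rcases hB01 ω with h | h <;> simp [h]
  have hUint : Integrable U P := .of_bound hUmeas.aestronglyMeasurable 1
    (.of_forall fun ω => by
      rw [Real.norm_eq_abs, abs_of_nonneg (hU01 ω).1]; exact (hU01 ω).2)
  have hVint : Integrable V P := .of_bound hVmeas.aestronglyMeasurable 1
    (.of_forall fun ω => by
      rw [Real.norm_eq_abs, abs_of_nonneg (hV01 ω).1]; exact (hV01 ω).2)
  have hBint : Integrable (fun ω => 1 - B ω) P :=
    .of_bound (measurable_const.sub hBmeas).aestronglyMeasurable 1 (.of_forall hBnorm)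
  have hprod : Integrable (fun ω => (U ω - V ω) * (1 - B ω)) P :=
    hBint.bdd_mul (hUmeas.sub hVmeas).aestronglyMeasurable (.of_forall hdiff01)
  have havg : Integrable (fun ω => (U ω + V ω) / 2) P := (hUint.add hVint).div_const 2
  have hchoice : Integrable (fun ω => U ω * (1 - B ω) + V ω * B ω) P := by
    refine (hprod.add hVint).congr (.of_forall fun ω => ?_)
    change (U ω - V ω) * (1 - B ω) + V ω = U ω * (1 - B ω) + V ω * B ω
    ring
  have hm : MeasurableSpace.comap (fun ω' => (U ω', V ω')) inferInstance ≤ ‹MeasurableSpace Ω› :=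
    (hUmeas.prodMk hVmeas).comap_le
  have hdiff : StronglyMeasurable[MeasurableSpace.comap (fun ω' => (U ω', V ω')) inferInstance]
      (fun ω => U ω - V ω) :=
    ((measurable_fst.sub measurable_snd).comp
      (comap_measurable (fun ω' => (U ω', V ω')))).stronglyMeasurable
  have hpull := condExp_mul_of_stronglyMeasurable_left hdiff hprod hBint
  have hφ : (P[fun ω => (U ω - V ω) * (1 - B ω) |
      MeasurableSpace.comap (fun ω' => (U ω', V ω')) inferInstance])
      =ᵐ[P] fun ω => (U ω - V ω) * φ (U ω, V ω) := by
    filter_upwards [hpull, hcond] with ω h1 h2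
    exact h1.trans (congrArg ((U ω - V ω) * ·) h2)
  have hφint : Integrable (fun ω => (U ω - V ω) * φ (U ω, V ω)) P :=
    integrable_condExp.congr hφ
  have hkey : ∫ ω, (U ω - V ω) * (1 - B ω) ∂P = ∫ ω, (U ω - V ω) * φ (U ω, V ω) ∂P := by
    rw [← integral_condExp hm]
    exact integral_congr_ae hφ
  have hhalf : ∀ u v : ℝ, (u - v) / 2 ≤ (u - v) * φ (u, v) := fun u v => by
    rcases lt_trichotomy u v with h | rfl | h
    · nlinarith [hφgt v u h, hφsum u v]
    · simp
    · nlinarith [hφgt u v h]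
  have hmono : ∫ ω, (U ω - V ω) / 2 ∂P ≤ ∫ ω, (U ω - V ω) * φ (U ω, V ω) ∂P :=
    integral_mono ((hUint.sub hVint).div_const 2) hφint fun ω => hhalf (U ω) (V ω)
  have hmain : ∫ ω, (U ω + V ω) / 2 ∂P ≤ ∫ ω, (U ω * (1 - B ω) + V ω * B ω) ∂P := by
    calc ∫ ω, (U ω + V ω) / 2 ∂P = ∫ ω, ((U ω - V ω) / 2 + V ω) ∂P := by
          congr 1 with ω
          ring
      _ = ∫ ω, (U ω - V ω) / 2 ∂P + ∫ ω, V ω ∂P :=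
          integral_add ((hUint.sub hVint).div_const 2) hVint
      _ ≤ ∫ ω, (U ω - V ω) * (1 - B ω) ∂P + ∫ ω, V ω ∂P := by
          rw [hkey]
          gcongr
      _ = ∫ ω, ((U ω - V ω) * (1 - B ω) + V ω) ∂P := (integral_add hprod hVint).symm
      _ = ∫ ω, (U ω * (1 - B ω) + V ω * B ω) ∂P := by
          congr 1 with ω
          ring
  refine ⟨hmain, fun μstar => ?_⟩
  rw [integral_sub (integrable_const _) hchoice, integral_sub (integrable_const _) havg]
  linarith
end

section
/- Let α ≥ 1 and c > 0 be reals, and let B : ℕ → ℝ satisfy 0 ≤ B(n) for all n, B(n) ≤ c·(ln n)^α for all n ≥ 2, and B(0), B(1) ≤ c. Then there exists a constant C, depending only on α, such that for every integer k ≥ 1 and every integer Z with 0 ≤ Z ≤ 2^{k+1} − 1, setting T = 2^{k+1} − 2 + Z, one has 1/2 + 3·Σ_{i=1}^{k} B(2^i) + B(Z) ≤ 1/2 + C·c·(1 + (ln T)^{α+1}). -/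
/-!
Write `L = log T`. Since `2 ^ k ≤ T`, every `log (2 ^ i)` with `i ≤ k` is at most `L`, so each of the
`k` summands is at most `c * L ^ α`; and `k * log 2 ≤ L` with `log 2 > 1 / 2` gives `k ≤ 2 * L`.
Hence the sum is at most `2 * c * L ^ (α + 1)`. The last term is at most `c * (1 + L ^ (α + 1))`,
as `Z ≤ T`, so `C = 7` works.
-/


open Finset

/-- **Theorem 1, polylogarithmic case.** If the MAB black box used by
`Doubler` has expected-regret bound `B` with `B n ≤ c·(ln n)^α` for `n ≥ 2` (and
`B 0, B 1 ≤ c`), then there is a constant `C` depending only on `α` such that, for any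
time horizon `T = 2^{k+1} − 2 + Z` with `1 ≤ k` and `0 ≤ Z ≤ 2^{k+1} − 1`, the regret
expression `1/2 + 3·Σ_{i=1}^k B(2^i) + B(Z)` of Doubler is at most
`1/2 + C·c·(1 + (ln T)^{α+1})`. -/
theorem doubler_regret_polylog (α : ℝ) (hα : 1 ≤ α) :
    ∃ C : ℝ, ∀ c : ℝ, 0 < c → ∀ B : ℕ → ℝ,
      (∀ n : ℕ, 0 ≤ B n) →
      (∀ n : ℕ, 2 ≤ n → B n ≤ c * (Real.log n) ^ α) →
      B 0 ≤ c → B 1 ≤ c →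
      ∀ k : ℕ, 1 ≤ k → ∀ Z : ℕ, Z ≤ 2 ^ (k + 1) - 1 →
        1 / 2 + 3 * (∑ i ∈ Icc 1 k, B (2 ^ i)) + B Z ≤
          1 / 2 + C * c * (1 + (Real.log ((2 ^ (k + 1) - 2 + Z : ℕ) : ℝ)) ^ (α + 1)) := by
  refine ⟨7, fun c hc B _ hB hB0 hB1 k hk Z _ => ?_⟩
  have hα0 : 0 ≤ α := by linarith
  have h2k : 2 ≤ 2 ^ k := Nat.le_self_pow (by omega) 2
  have hpow : 2 ^ (k + 1) = 2 * 2 ^ k := by rw [pow_succ, mul_comm]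
  generalize hT : 2 ^ (k + 1) - 2 + Z = T
  have hkT : 2 ^ k ≤ T := by omega
  have hZT : Z ≤ T := by omega
  generalize hL : Real.log (T : ℝ) = L
  have hlog : ∀ n : ℕ, 2 ≤ n → n ≤ T → B n ≤ c * L ^ α := by
    intro n hn hnT
    refine (hB n hn).trans ?_
    have h0 : (1 : ℝ) ≤ n := by exact_mod_cast (by omega : 1 ≤ n)
    have h1 : Real.log n ≤ L := by
      rw [← hL]
      exact Real.log_le_log (by linarith) (by exact_mod_cast hnT)
    gcongr
  have hkL : (k : ℝ) * Real.log 2 ≤ L := by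
    rw [← Real.log_pow, ← hL]
    exact Real.log_le_log (by positivity) (by exact_mod_cast hkT)
  have hlog2 := Real.log_two_gt_d9
  have hk1 : (1 : ℝ) ≤ k := by exact_mod_cast hk
  have hLpos : 0 < L := by nlinarith
  have hk2L : (k : ℝ) ≤ 2 * L := by nlinarith
  have hP : 0 < L ^ α := Real.rpow_pos_of_pos hLpos α
  have hadd : L ^ (α + 1) = L ^ α * L := Real.rpow_add_one hLpos.ne' α
  have hsum : ∑ i ∈ Icc 1 k, B (2 ^ i) ≤ k * (c * L ^ α) := by
    have h := Finset.sum_le_card_nsmul (Icc 1 k) (fun i => B (2 ^ i)) (c * L ^ α) (by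
      intro i hi
      rw [mem_Icc] at hi
      exact hlog _ (Nat.le_self_pow (by omega) 2)
        ((Nat.pow_le_pow_right (by norm_num) hi.2).trans hkT))
    simpa using h
  have hsum' : (k : ℝ) * (c * L ^ α) ≤ 2 * L * (c * L ^ α) := by gcongr
  have hPle : L ^ α ≤ 1 + L ^ α * L := by
    rcases le_total L 1 with h | h
    · have := Real.rpow_le_one hLpos.le h hα0
      nlinarith
    · nlinarith
  have hBZ : B Z ≤ c * (1 + L ^ α * L) := by
    have h1 : c ≤ c * (1 + L ^ α * L) := le_mul_of_one_le_right hc.le (by nlinarith)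
    rcases (by omega : Z = 0 ∨ Z = 1 ∨ 2 ≤ Z) with h | h | h
    · rw [h]; exact hB0.trans h1
    · rw [h]; exact hB1.trans h1
    · exact (hlog Z h hZT).trans (by gcongr)
  rw [hadd]
  linarith
end
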